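/- arXiv:2601.07095 — 2 statements merged into one kernel-verified Lean document; each statement's English description precedes it below -/
import Mathlib

section
/- Let P > 0 and σ² > 0, let X and Z be independent real-valued random variables with X ~ gaussianReal 0 P and Z ~ gaussianReal 0 σ², and set Y = X + Z. Then the minimum mean-square error of estimating X from Y satisfies E[(X − E[X | σ(Y)])²] = P·σ²/(P + σ²). -/
open MeasureTheory ProbabilityTheory

/-!
Subtracting from `X` its linear regression `c • Y` on `Y` leaves a residual `X - c • Y` uncorrelated
with `Y`. When `(X, Y)` is Gaussian, uncorrelated means independent, so conditioning on `Y` replaces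
the residual by its mean and leaves `c • Y` alone: the estimation error of `X` is the centred
residual, and the MMSE is its variance `Var[X] - cov[X, Y]² / Var[Y]`. For `Y = X + Z` with `Z`
independent of `X`, `cov[X, Y] = Var[X]` and `Var[Y] = Var[X] + Var[Z]`.
-/

section LinearResidual

variable {Ω : Type*} {mΩ : MeasurableSpace Ω} {μ : Measure Ω} {X Y : Ω → ℝ}

lemma covariance_eq_zero_of_variance_right_eq_zero [IsFiniteMeasure μ] (hY : MemLp Y 2 μ)
    (hvar : Var[Y; μ] = 0) : cov[X, Y; μ] = 0 := by
  refine integral_eq_zero_of_ae ?_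
  filter_upwards [ae_eq_integral_of_variance_eq_zero hY hvar] with ω hω
  simp [hω]

/-- The residual of the linear regression of `X` on `Y`. It is not centred, and it equals `X` when
`Var[Y; μ] = 0`, because the regression coefficient is then `0` by the convention `x / 0 = 0`. -/
noncomputable def linearResidual (X Y : Ω → ℝ) (μ : Measure Ω) : Ω → ℝ :=
  X - (cov[X, Y; μ] / Var[Y; μ]) • Y

lemma covariance_linearResidual_eq_zero [IsFiniteMeasure μ] (hX : MemLp X 2 μ)
    (hY : MemLp Y 2 μ) : cov[linearResidual X Y μ, Y; μ] = 0 := by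
  rw [linearResidual, covariance_sub_left hX (hY.const_smul _) hY, covariance_smul_left,
    covariance_self hY.aemeasurable,
    div_mul_cancel_of_imp (covariance_eq_zero_of_variance_right_eq_zero hY), sub_self]

lemma variance_linearResidual [IsFiniteMeasure μ] (hX : MemLp X 2 μ) (hY : MemLp Y 2 μ) :
    Var[linearResidual X Y μ; μ] = Var[X; μ] - cov[X, Y; μ] ^ 2 / Var[Y; μ] := by
  rw [linearResidual, variance_sub hX (hY.const_smul _), variance_smul, covariance_smul_right]
  by_cases hvar : Var[Y; μ] = 0
  · simp [hvar]
  · field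

lemma hasGaussianLaw_linearResidual_prodMk (hXY : HasGaussianLaw (fun ω ↦ (X ω, Y ω)) μ) :
    HasGaussianLaw (fun ω ↦ (linearResidual X Y μ ω, Y ω)) μ :=
  hXY.map_fun ((ContinuousLinearMap.fst ℝ ℝ ℝ -
    (cov[X, Y; μ] / Var[Y; μ]) • ContinuousLinearMap.snd ℝ ℝ ℝ).prod
      (ContinuousLinearMap.snd ℝ ℝ ℝ))

lemma indepFun_linearResidual (hXY : HasGaussianLaw (fun ω ↦ (X ω, Y ω)) μ) :
    IndepFun (linearResidual X Y μ) Y μ := by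
  have := hXY.isProbabilityMeasure
  exact (hasGaussianLaw_linearResidual_prodMk hXY).indepFun_of_covariance_eq_zero
    (covariance_linearResidual_eq_zero hXY.fst.memLp_two hXY.snd.memLp_two)

end LinearResidual

section CondExp

variable {Ω E β : Type*} {mΩ : MeasurableSpace Ω} {mβ : MeasurableSpace β} {μ : Measure Ω}
  [IsFiniteMeasure μ] [NormedAddCommGroup E] [NormedSpace ℝ E] [CompleteSpace E]
  [MeasurableSpace E] [BorelSpace E] [SecondCountableTopology E] {Y : Ω → β}

lemma condExp_comap_ae_eq_integral_of_indepFun {W : Ω → E} (hW : AEMeasurable W μ)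
    (hY : Measurable Y) (hWY : IndepFun W Y μ) :
    μ[W | mβ.comap Y] =ᵐ[μ] fun _ ↦ μ[W] := by
  have hmk : IndepFun (hW.mk W) Y μ := hWY.congr hW.ae_eq_mk .rfl
  calc μ[W | mβ.comap Y]
    _ =ᵐ[μ] μ[hW.mk W | mβ.comap Y] := condExp_congr_ae hW.ae_eq_mk
    _ =ᵐ[μ] fun _ ↦ μ[hW.mk W] :=
      condExp_indep_eq hW.measurable_mk.comap_le hY.comap_le
        (comap_measurable _).stronglyMeasurable hmk
    _ = fun _ ↦ μ[W] := by rw [integral_congr_ae hW.ae_eq_mk]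

lemma sub_condExp_comap_ae_eq_of_indepFun_sub {X g : Ω → E} (hX : Integrable X μ)
    (hg : Integrable g μ) (hY : Measurable Y) (hgY : StronglyMeasurable[mβ.comap Y] g)
    (hXgY : IndepFun (X - g) Y μ) :
    X - μ[X | mβ.comap Y] =ᵐ[μ] fun ω ↦ (X - g) ω - μ[X - g] := by
  have h_sub : μ[X - g | mβ.comap Y] =ᵐ[μ] μ[X | mβ.comap Y] - g := by
    simpa only [condExp_of_stronglyMeasurable hY.comap_le hgY hg]
      using condExp_sub hX hg (mβ.comap Y)
  filter_upwards [h_sub, condExp_comap_ae_eq_integral_of_indepFun (hX.sub hg).aemeasurable hY hXgY]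
    with ω hω hω_integral
  rw [← hω_integral, hω]
  simp only [Pi.sub_apply, sub_sub_sub_cancel_right]

lemma integral_sq_sub_condExp_comap_of_indepFun_sub {X g : Ω → ℝ} (hX : Integrable X μ)
    (hg : Integrable g μ) (hY : Measurable Y) (hgY : StronglyMeasurable[mβ.comap Y] g)
    (hXgY : IndepFun (X - g) Y μ) :
    ∫ ω, (X ω - (μ[X | mβ.comap Y]) ω) ^ 2 ∂μ = Var[X - g; μ] := by
  rw [variance_eq_integral (hX.sub hg).aemeasurable]
  refine integral_congr_ae ?_
  filter_upwards [sub_condExp_comap_ae_eq_of_indepFun_sub hX hg hY hgY hXgY] with ω hω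
  rw [← hω, Pi.sub_apply]

end CondExp

section Gaussian

variable {Ω : Type*} {mΩ : MeasurableSpace Ω} {μ : Measure Ω}

lemma integral_sq_sub_condExp_comap_of_hasGaussianLaw {X Y : Ω → ℝ}
    (hXY : HasGaussianLaw (fun ω ↦ (X ω, Y ω)) μ) (hY : Measurable Y) :
    ∫ ω, (X ω - (μ[X | Real.measurableSpace.comap Y]) ω) ^ 2 ∂μ
      = Var[X; μ] - cov[X, Y; μ] ^ 2 / Var[Y; μ] := by
  have := hXY.isProbabilityMeasure
  rw [← variance_linearResidual hXY.fst.memLp_two hXY.snd.memLp_two]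
  exact integral_sq_sub_condExp_comap_of_indepFun_sub hXY.fst.integrable
    (hXY.snd.integrable.smul _) hY ((comap_measurable Y).stronglyMeasurable.const_smul _)
    (indepFun_linearResidual hXY)

lemma covariance_self_add_of_indepFun [IsFiniteMeasure μ] {X Z : Ω → ℝ} (hX : MemLp X 2 μ)
    (hZ : MemLp Z 2 μ) (hXZ : IndepFun X Z μ) : cov[X, X + Z; μ] = Var[X; μ] := by
  rw [covariance_add_right hX hX hZ, covariance_self hX.aemeasurable,
    hXZ.covariance_eq_zero hX hZ, add_zero]

lemma hasGaussianLaw_prodMk_add_of_indepFun {X Z : Ω → ℝ} (hX : HasGaussianLaw X μ)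
    (hZ : HasGaussianLaw Z μ) (hXZ : IndepFun X Z μ) :
    HasGaussianLaw (fun ω ↦ (X ω, (X + Z) ω)) μ :=
  (hXZ.hasGaussianLaw hX hZ).map_fun ((ContinuousLinearMap.fst ℝ ℝ ℝ).prod
    (ContinuousLinearMap.fst ℝ ℝ ℝ + ContinuousLinearMap.snd ℝ ℝ ℝ))

theorem mmse_gaussian_channel_general {X Z : Ω → ℝ} {a b : ℝ} {p q : NNReal}
    (hX : HasLaw X (gaussianReal a p) μ) (hZ : HasLaw Z (gaussianReal b q) μ)
    (hXZ : IndepFun X Z μ) (hY : Measurable (X + Z)) (hpq : (p + q : ℝ) ≠ 0) :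
    ∫ ω, (X ω - (μ[X | Real.measurableSpace.comap (X + Z)]) ω) ^ 2 ∂μ = p * q / (p + q) := by
  have hXG := hX.hasGaussianLaw
  have hZG := hZ.hasGaussianLaw
  have := hXG.isProbabilityMeasure
  have hXvar : Var[X; μ] = p := hX.variance_eq.trans variance_id_gaussianReal
  have hZvar : Var[Z; μ] = q := hZ.variance_eq.trans variance_id_gaussianReal
  calc ∫ ω, (X ω - (μ[X | Real.measurableSpace.comap (X + Z)]) ω) ^ 2 ∂μ
    _ = Var[X; μ] - cov[X, X + Z; μ] ^ 2 / Var[X + Z; μ] :=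
      integral_sq_sub_condExp_comap_of_hasGaussianLaw
        (hasGaussianLaw_prodMk_add_of_indepFun hXG hZG hXZ) hY
    _ = p - p ^ 2 / (p + q) := by
      rw [covariance_self_add_of_indepFun hXG.memLp_two hZG.memLp_two hXZ,
        hXZ.variance_add hXG.memLp_two hZG.memLp_two, hXvar, hZvar]
    _ = p * q / (p + q) := by field

end Gaussian

/-- MMSE of the scalar Gaussian channel (Theorem 1): if `X ~ N(0, P)` and
`Z ~ N(0, σ²)` are independent and `Y = X + Z`, then
`E[(X − E[X | σ(Y)])²] = P·σ²/(P + σ²)`. -/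
theorem mmse_gaussian_channel
    {Ω : Type*} [MeasureSpace Ω] [IsProbabilityMeasure (ℙ : Measure Ω)]
    (P σ2 : ℝ) (hP : 0 < P) (hσ : 0 < σ2)
    (X Z : Ω → ℝ) (hX : Measurable X) (hZ : Measurable Z)
    (hXlaw : Measure.map X ℙ = gaussianReal 0 ⟨P, hP.le⟩)
    (hZlaw : Measure.map Z ℙ = gaussianReal 0 ⟨σ2, hσ.le⟩)
    (hindep : IndepFun X Z ℙ)
    (Y : Ω → ℝ) (hY : Y = fun ω => X ω + Z ω) :
    ∫ ω, (X ω - (ℙ[X | MeasurableSpace.comap Y Real.measurableSpace]) ω) ^ 2 ∂ℙ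
      = P * σ2 / (P + σ2) := by
  subst hY
  exact mmse_gaussian_channel_general ⟨hX.aemeasurable, hXlaw⟩ ⟨hZ.aemeasurable, hZlaw⟩ hindep
    (hX.add hZ) (add_pos hP hσ).ne'
end

section
/- Let (Ω, 𝓕, ℙ) be a probability space, v > 0, X : Ω → ℝ an integrable random variable, and Z : Ω → ℝ a random variable independent of X with law gaussianReal 0 v. Set R = X + Z, let φ_v denote the density of gaussianReal 0 v with respect to Lebesgue measure, and define q(r) = ∫ φ_v(r − x) d(law of X)(x). Then q is a strictly positive, differentiable density of the law of R, and Tweedie's formula holds: E[X | σ(R)] = R + v·(q'(R)/q(R)) ℙ-almost surely; that is, the posterior mean equals the noisy observation plus v times the score of the marginal density of R. -/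
open MeasureTheory ProbabilityTheory

/-!
By independence and translation invariance of Lebesgue measure, `(X, R)` has density `φ_v (r - x)`
with respect to `(law X) ⊗ volume`. Bayes' formula therefore gives `E[X | R = r]` as the mean of `x`
with weights `φ_v (r - x)`, whose total mass is `q r`. Since `v φ_v' t = -t φ_v t`, differentiating
under the integral sign yields `∫ x φ_v (r - x) d(law X)(x) = r q r + v q' r`, and it remains to
divide by `q r`.
-/

open scoped NNReal ENNReal

section JointDensity

variable {Ω 𝓧 𝓨 E : Type*} {mΩ : MeasurableSpace Ω} [MeasurableSpace 𝓧] [MeasurableSpace 𝓨]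
  [NormedAddCommGroup E] [NormedSpace ℝ E] {P : Measure Ω}
  {μ : Measure 𝓧} {ν : Measure 𝓨} {d : 𝓧 × 𝓨 → ℝ≥0∞}

lemma map_snd_withDensity_prod [SFinite μ] [SFinite ν] (hd : Measurable d) :
    ((μ.prod ν).withDensity d).map Prod.snd = ν.withDensity fun y ↦ ∫⁻ x, d (x, y) ∂μ := by
  refine Measure.ext_of_lintegral _ fun f hf ↦ ?_
  rw [lintegral_map hf measurable_snd,
    lintegral_withDensity_eq_lintegral_mul _ hd (by fun_prop),
    lintegral_withDensity_eq_lintegral_mul _ hd.lintegral_prod_left' hf,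
    lintegral_prod_symm' _ (by fun_prop)]
  exact lintegral_congr fun y ↦ lintegral_mul_const (f y) (hd.comp measurable_prodMk_right)

lemma map_snd_eq_withDensity_of_map_prodMk [SFinite μ] [SFinite ν] {X : Ω → 𝓧} {R : Ω → 𝓨}
    (hX : AEMeasurable X P) (hR : AEMeasurable R P) (hd : Measurable d)
    (hlaw : P.map (fun ω ↦ (X ω, R ω)) = (μ.prod ν).withDensity d) :
    P.map R = ν.withDensity fun y ↦ ∫⁻ x, d (x, y) ∂μ := by
  rw [← map_snd_withDensity_prod hd, ← hlaw,
    AEMeasurable.map_map_of_aemeasurable measurable_snd.aemeasurable (hX.prodMk hR)]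
  rfl

lemma integral_smul_inv_integral_smul_integral_smul {w : 𝓧 → ℝ} (hw : Integrable w μ)
    (hw_nonneg : 0 ≤ w) (f : 𝓧 → E) :
    (∫ x, w x ∂μ) • (∫ x, w x ∂μ)⁻¹ • ∫ x, w x • f x ∂μ = ∫ x, w x • f x ∂μ := by
  rcases eq_or_ne (∫ x, w x ∂μ) 0 with hzero | hne
  · have hw_zero : w =ᵐ[μ] 0 := (integral_eq_zero_iff_of_nonneg hw_nonneg hw).1 hzero
    have hwf_zero : (fun x ↦ w x • f x) =ᵐ[μ] 0 := by
      filter_upwards [hw_zero] with x hx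
      simp [hx]
    rw [integral_eq_zero_of_ae hwf_zero, smul_zero, smul_zero]
  · exact smul_inv_smul₀ hne _

lemma ae_lt_top_of_isFiniteMeasure_withDensity {w : 𝓧 → ℝ≥0∞} [IsFiniteMeasure (μ.withDensity w)]
    (hw : Measurable w) : ∀ᵐ x ∂μ, w x < ∞ :=
  ae_lt_top hw <| by
    rw [← setLIntegral_univ, ← withDensity_apply w .univ]
    exact measure_ne_top _ _

lemma integrable_toReal_smul_of_integrable_withDensity {w : 𝓧 → ℝ≥0∞}
    [IsFiniteMeasure (μ.withDensity w)] {f : 𝓧 → E} (hw : Measurable w)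
    (hf : Integrable f (μ.withDensity w)) : Integrable (fun x ↦ (w x).toReal • f x) μ :=
  (integrable_withDensity_iff_integrable_smul' hw
    (ae_lt_top_of_isFiniteMeasure_withDensity hw)).1 hf

/-- The mean of `f (·, y)` under `μ` with weights `d (·, y)`, normalized by their total mass: the
posterior mean of `f` given the observation `y`, for the prior `μ` and the likelihood `d`. Infinite
weights count as `0`, and the mean is `0` if the total mass vanishes. -/
noncomputable def weightedMean (μ : Measure 𝓧) (d : 𝓧 × 𝓨 → ℝ≥0∞) (f : 𝓧 × 𝓨 → E) (y : 𝓨) : E :=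
  (∫ x, (d (x, y)).toReal ∂μ)⁻¹ • ∫ x, (d (x, y)).toReal • f (x, y) ∂μ

variable [SFinite μ] [SFinite ν] [IsFiniteMeasure ((μ.prod ν).withDensity d)]

lemma ae_lintegral_lt_top_of_isFiniteMeasure_withDensity_prod (hd : Measurable d) :
    ∀ᵐ y ∂ν, ∫⁻ x, d (x, y) ∂μ < ∞ := by
  have : IsFiniteMeasure (ν.withDensity fun y ↦ ∫⁻ x, d (x, y) ∂μ) := by
    rw [← map_snd_withDensity_prod hd]
    infer_instance
  exact ae_lt_top_of_isFiniteMeasure_withDensity hd.lintegral_prod_left'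

lemma setIntegral_preimage_snd_withDensity_prod {f : 𝓧 × 𝓨 → E} (hd : Measurable d)
    (hf : Integrable f ((μ.prod ν).withDensity d)) {B : Set 𝓨} (hB : MeasurableSet B) :
    ∫ p in Prod.snd ⁻¹' B, f p ∂(μ.prod ν).withDensity d
      = ∫ y in B, ∫ x, (d (x, y)).toReal • f (x, y) ∂μ ∂ν := by
  have hint : IntegrableOn (fun p ↦ (d p).toReal • f p) (Set.univ ×ˢ B) (μ.prod ν) :=
    (integrable_toReal_smul_of_integrable_withDensity hd hf).integrableOn
  rw [setIntegral_withDensity_eq_setIntegral_toReal_smul hd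
    (ae_restrict_of_ae (ae_lt_top_of_isFiniteMeasure_withDensity hd)) _ (measurable_snd hB),
    ← Set.univ_prod]
  rw [IntegrableOn, ← Measure.prod_restrict, Measure.restrict_univ] at hint
  rw [← Measure.prod_restrict, Measure.restrict_univ, integral_prod_symm _ hint]

lemma toReal_lintegral_smul_weightedMean_ae_eq (hd : Measurable d) (f : 𝓧 × 𝓨 → E) :
    (fun y ↦ (∫⁻ x, d (x, y) ∂μ).toReal • weightedMean μ d f y)
      =ᵐ[ν] fun y ↦ ∫ x, (d (x, y)).toReal • f (x, y) ∂μ := by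
  filter_upwards [ae_lintegral_lt_top_of_isFiniteMeasure_withDensity_prod (μ := μ) (ν := ν) hd]
    with y hy
  have hdy : Measurable fun x ↦ d (x, y) := hd.comp measurable_prodMk_right
  rw [weightedMean, ← integral_toReal hdy.aemeasurable (ae_lt_top hdy hy.ne)]
  exact integral_smul_inv_integral_smul_integral_smul
    (integrable_toReal_of_lintegral_ne_top hdy.aemeasurable hy.ne)
    (fun _ ↦ ENNReal.toReal_nonneg) _

lemma integrable_weightedMean {f : 𝓧 × 𝓨 → E} (hd : Measurable d)
    (hf : Integrable f ((μ.prod ν).withDensity d)) :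
    Integrable (weightedMean μ d f) (ν.withDensity fun y ↦ ∫⁻ x, d (x, y) ∂μ) := by
  rw [integrable_withDensity_iff_integrable_smul' hd.lintegral_prod_left'
    (ae_lintegral_lt_top_of_isFiniteMeasure_withDensity_prod hd)]
  exact (integrable_toReal_smul_of_integrable_withDensity hd hf).integral_prod_right.congr
    (toReal_lintegral_smul_weightedMean_ae_eq hd f).symm

lemma setIntegral_weightedMean {f : 𝓧 × 𝓨 → E} (hd : Measurable d)
    (hf : Integrable f ((μ.prod ν).withDensity d)) {B : Set 𝓨} (hB : MeasurableSet B) :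
    ∫ y in B, weightedMean μ d f y ∂(ν.withDensity fun y ↦ ∫⁻ x, d (x, y) ∂μ)
      = ∫ p in Prod.snd ⁻¹' B, f p ∂(μ.prod ν).withDensity d := by
  rw [setIntegral_preimage_snd_withDensity_prod hd hf hB,
    setIntegral_withDensity_eq_setIntegral_toReal_smul hd.lintegral_prod_left'
      (ae_restrict_of_ae (ae_lintegral_lt_top_of_isFiniteMeasure_withDensity_prod hd)) _ hB]
  exact integral_congr_ae (ae_restrict_of_ae (toReal_lintegral_smul_weightedMean_ae_eq hd f))

end JointDensity

section Bayes

variable {Ω 𝓧 𝓨 E : Type*} {mΩ : MeasurableSpace Ω} [MeasurableSpace 𝓧] [m𝓨 : MeasurableSpace 𝓨]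
  [NormedAddCommGroup E] [NormedSpace ℝ E] [CompleteSpace E]
  {P : Measure Ω} [IsFiniteMeasure P] {μ : Measure 𝓧} [SFinite μ] {ν : Measure 𝓨} [SFinite ν]
  {d : 𝓧 × 𝓨 → ℝ≥0∞}

theorem condExp_comap_ae_eq_weightedMean {X : Ω → 𝓧} {R : Ω → 𝓨} (hX : AEMeasurable X P)
    (hR : Measurable R) (hd : Measurable d)
    (hlaw : P.map (fun ω ↦ (X ω, R ω)) = (μ.prod ν).withDensity d)
    {f : 𝓧 × 𝓨 → E} (hf : Integrable f ((μ.prod ν).withDensity d)) :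
    P[fun ω ↦ f (X ω, R ω) | m𝓨.comap R] =ᵐ[P] fun ω ↦ weightedMean μ d f (R ω) := by
  have hXR : AEMeasurable (fun ω ↦ (X ω, R ω)) P := hX.prodMk hR.aemeasurable
  have : IsFiniteMeasure ((μ.prod ν).withDensity d) := hlaw ▸ inferInstance
  have hRlaw := map_snd_eq_withDensity_of_map_prodMk hX hR.aemeasurable hd hlaw
  have hmean : Integrable (weightedMean μ d f) (P.map R) :=
    hRlaw ▸ integrable_weightedMean hd hf
  rw [← hlaw] at hf
  refine (ae_eq_condExp_of_forall_setIntegral_eq hR.comap_le (hf.comp_aemeasurable hXR)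
    (fun _ _ _ ↦ (hmean.comp_measurable hR).integrableOn) ?_
    (hmean.aestronglyMeasurable.comp_ae_measurable' hR.aemeasurable)).symm
  rintro _ ⟨B, hB, rfl⟩ -
  calc ∫ ω in R ⁻¹' B, weightedMean μ d f (R ω) ∂P
      = ∫ y in B, weightedMean μ d f y ∂P.map R :=
        (setIntegral_map hB hmean.aestronglyMeasurable hR.aemeasurable).symm
    _ = ∫ p in Prod.snd ⁻¹' B, f p ∂P.map (fun ω ↦ (X ω, R ω)) := by
        rw [hRlaw, hlaw, setIntegral_weightedMean hd (hlaw ▸ hf) hB]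
    _ = ∫ ω in R ⁻¹' B, f (X ω, R ω) ∂P :=
        setIntegral_map (measurable_snd hB) hf.aestronglyMeasurable hXR

end Bayes

section AdditiveNoise

variable {Ω G : Type*} {mΩ : MeasurableSpace Ω} {P : Measure Ω} [IsFiniteMeasure P]
  [AddGroup G] [MeasurableSpace G] [MeasurableAdd₂ G] [MeasurableNeg G]
  {ν : Measure G} [SFinite ν] [ν.IsAddLeftInvariant] {d : G → ℝ≥0∞}

lemma map_prodMk_add_prod_withDensity (μ : Measure G) [SFinite μ] (hd : Measurable d) :
    (μ.prod (ν.withDensity d)).map (fun p ↦ (p.1, p.1 + p.2))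
      = (μ.prod ν).withDensity fun p ↦ d (-p.1 + p.2) := by
  refine Measure.ext_of_lintegral _ fun f hf ↦ ?_
  rw [lintegral_map hf (by fun_prop), prod_withDensity_right hd,
    lintegral_withDensity_eq_lintegral_mul _ (by fun_prop) (by fun_prop),
    lintegral_withDensity_eq_lintegral_mul _ (by fun_prop) hf,
    ← (measurePreserving_prod_add μ ν).lintegral_comp
      (f := (fun p : G × G ↦ d (-p.1 + p.2)) * f) (by fun_prop)]
  simp only [Pi.mul_apply, neg_add_cancel_left]

lemma map_prodMk_add_eq_withDensity_of_indepFun {X Z : Ω → G} (hX : AEMeasurable X P)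
    (hZ : AEMeasurable Z P) (hXZ : IndepFun X Z P) (hd : Measurable d)
    (hZlaw : P.map Z = ν.withDensity d) :
    P.map (fun ω ↦ (X ω, X ω + Z ω))
      = ((P.map X).prod ν).withDensity fun p ↦ d (-p.1 + p.2) := by
  rw [← map_prodMk_add_prod_withDensity _ hd, ← hZlaw,
    ← (indepFun_iff_map_prod_eq_prod_map_map hX hZ).1 hXZ,
    AEMeasurable.map_map_of_aemeasurable (by fun_prop) (hX.prodMk hZ)]
  rfl

end AdditiveNoise

section GaussianPDF

variable (m : ℝ) (v : ℝ≥0) (x : ℝ)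

lemma gaussianPDFReal_le : gaussianPDFReal m v x ≤ (√(2 * Real.pi * v))⁻¹ := by
  rw [gaussianPDFReal]
  refine mul_le_of_le_one_right (by positivity) (Real.exp_le_one_iff.2 ?_)
  exact div_nonpos_of_nonpos_of_nonneg (neg_nonpos.2 (sq_nonneg _)) (by positivity)

lemma hasDerivAt_gaussianPDFReal :
    HasDerivAt (gaussianPDFReal m v) (-((x - m) / v) * gaussianPDFReal m v x) x := by
  have hexponent : HasDerivAt (fun t ↦ -(t - m) ^ 2 / (2 * v)) (-((x - m) / v)) x := by
    refine ((((hasDerivAt_id x).sub_const m).pow 2).neg.div_const (2 * (v : ℝ))).congr_deriv ?_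
    simp only [id]
    ring
  rw [gaussianPDFReal_def]
  exact (hexponent.exp.const_mul _).congr_deriv (by ring)

lemma deriv_gaussianPDFReal :
    deriv (gaussianPDFReal m v) x = -((x - m) / v) * gaussianPDFReal m v x :=
  (hasDerivAt_gaussianPDFReal m v x).deriv

lemma differentiable_gaussianPDFReal : Differentiable ℝ (gaussianPDFReal m v) :=
  fun x ↦ (hasDerivAt_gaussianPDFReal m v x).differentiableAt

lemma abs_mul_exp_neg_sq_div_two_le_one (u : ℝ) : |u| * Real.exp (-(u ^ 2 / 2)) ≤ 1 := by
  rw [Real.exp_neg, ← div_eq_mul_inv, div_le_one (Real.exp_pos _)]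
  calc |u| ≤ u ^ 2 / 2 + 1 := by nlinarith [sq_nonneg (|u| - 1), sq_abs u]
    _ ≤ Real.exp (u ^ 2 / 2) := Real.add_one_le_exp _

lemma norm_deriv_gaussianPDFReal_le :
    ‖deriv (gaussianPDFReal m v) x‖ ≤ (√v)⁻¹ * (√(2 * Real.pi * v))⁻¹ := by
  set u := (x - m) / √v with hu
  have hsq : √(v : ℝ) ^ 2 = v := Real.sq_sqrt v.2
  have hexponent : -(x - m) ^ 2 / (2 * v) = -(u ^ 2 / 2) := by
    rw [hu, div_pow, hsq]
    ring
  have hfactor : (x - m) / v = (√v)⁻¹ * u := by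
    rw [hu, inv_mul_eq_div, div_div, ← sq, hsq]
  rw [deriv_gaussianPDFReal, Real.norm_eq_abs, abs_mul, abs_neg,
    abs_of_nonneg (gaussianPDFReal_nonneg m v x), gaussianPDFReal, hexponent, hfactor, abs_mul,
    abs_of_nonneg (by positivity)]
  calc _ = (√v)⁻¹ * (√(2 * Real.pi * v))⁻¹ * (|u| * Real.exp (-(u ^ 2 / 2))) := by ring
    _ ≤ _ := mul_le_of_le_one_right (by positivity) (abs_mul_exp_neg_sq_div_two_le_one u)

end GaussianPDF

lemma hasDerivAt_integral_comp_sub {E : Type*} [NormedAddCommGroup E] [NormedSpace ℝ E]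
    [CompleteSpace E] {μ : Measure ℝ} [IsFiniteMeasure μ] {φ : ℝ → E} {C r : ℝ}
    (hφ : Differentiable ℝ φ) (hC : ∀ t, ‖deriv φ t‖ ≤ C)
    (hint : Integrable (fun x ↦ φ (r - x)) μ) :
    HasDerivAt (fun r ↦ ∫ x, φ (r - x) ∂μ) (∫ x, deriv φ (r - x) ∂μ) r := by
  refine (hasDerivAt_integral_of_dominated_loc_of_deriv_le (F := fun r x ↦ φ (r - x))
    (F' := fun r x ↦ deriv φ (r - x)) (bound := fun _ ↦ C) Filter.univ_mem ?_ hint ?_ ?_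
    (integrable_const C) ?_).2
  · exact .of_forall fun r ↦ (hφ.continuous.comp (by fun_prop)).aestronglyMeasurable
  · exact ((stronglyMeasurable_deriv φ).comp_measurable (by fun_prop)).aestronglyMeasurable
  · exact .of_forall fun x r _ ↦ hC (r - x)
  · exact .of_forall fun x r _ ↦ (hφ (r - x)).hasDerivAt.comp_sub_const r x

/-- The density at `r` of the convolution of `μ` with the centered Gaussian of variance `v`, that
is, of the law of a variable of law `μ` observed under independent Gaussian noise. For `v = 0` it is
`0`, as `gaussianPDFReal` is. -/
noncomputable def gaussianConvPDFReal (μ : Measure ℝ) (v : ℝ≥0) (r : ℝ) : ℝ :=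
  ∫ x, gaussianPDFReal 0 v (r - x) ∂μ

section GaussianConvPDF

variable (μ : Measure ℝ) [IsFiniteMeasure μ] {v : ℝ≥0} (r : ℝ)

lemma integrable_gaussianPDFReal_sub : Integrable (fun x ↦ gaussianPDFReal 0 v (r - x)) μ :=
  .of_bound ((measurable_gaussianPDFReal 0 v).comp (by fun_prop)).aestronglyMeasurable _
    (.of_forall fun x ↦ by
      rw [Real.norm_of_nonneg (gaussianPDFReal_nonneg 0 v _)]
      exact gaussianPDFReal_le 0 v _)

lemma gaussianConvPDFReal_pos [NeZero μ] (hv : v ≠ 0) : 0 < gaussianConvPDFReal μ v r := by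
  have hpdf_pos (x : ℝ) : 0 < gaussianPDFReal 0 v (r - x) := gaussianPDFReal_pos 0 v _ hv
  have hsupport : (Function.support fun x ↦ gaussianPDFReal 0 v (r - x)) = Set.univ :=
    Set.eq_univ_of_forall fun x ↦ (hpdf_pos x).ne'
  rw [gaussianConvPDFReal, integral_pos_iff_support_of_nonneg (fun x ↦ (hpdf_pos x).le)
    (integrable_gaussianPDFReal_sub μ r), hsupport]
  exact Measure.measure_univ_pos.2 (NeZero.ne μ)

lemma ofReal_gaussianConvPDFReal :
    ENNReal.ofReal (gaussianConvPDFReal μ v r) = ∫⁻ x, gaussianPDF 0 v (r - x) ∂μ :=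
  ofReal_integral_eq_lintegral_ofReal (integrable_gaussianPDFReal_sub μ r)
    (.of_forall fun x ↦ gaussianPDFReal_nonneg 0 v (r - x))

lemma integrable_deriv_gaussianPDFReal_sub :
    Integrable (fun x ↦ deriv (gaussianPDFReal 0 v) (r - x)) μ :=
  .of_bound ((measurable_deriv _).comp (by fun_prop)).aestronglyMeasurable _
    (.of_forall fun x ↦ norm_deriv_gaussianPDFReal_le 0 v (r - x))

lemma hasDerivAt_gaussianConvPDFReal :
    HasDerivAt (gaussianConvPDFReal μ v) (∫ x, deriv (gaussianPDFReal 0 v) (r - x) ∂μ) r :=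
  hasDerivAt_integral_comp_sub (differentiable_gaussianPDFReal 0 v)
    (norm_deriv_gaussianPDFReal_le 0 v) (integrable_gaussianPDFReal_sub μ r)

lemma integral_gaussianPDFReal_sub_mul_id (hv : v ≠ 0) :
    ∫ x, gaussianPDFReal 0 v (r - x) * x ∂μ
      = r * gaussianConvPDFReal μ v r + v * deriv (gaussianConvPDFReal μ v) r := by
  have hsplit (x : ℝ) : gaussianPDFReal 0 v (r - x) * x
      = r * gaussianPDFReal 0 v (r - x) + v * deriv (gaussianPDFReal 0 v) (r - x) := by
    rw [deriv_gaussianPDFReal]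
    field_simp
    ring
  simp only [hsplit]
  rw [integral_add ((integrable_gaussianPDFReal_sub μ r).const_mul r)
      ((integrable_deriv_gaussianPDFReal_sub μ r).const_mul v), integral_const_mul,
    integral_const_mul, (hasDerivAt_gaussianConvPDFReal μ r).deriv, gaussianConvPDFReal]

lemma weightedMean_gaussianPDF_fst [NeZero μ] (hv : v ≠ 0) :
    weightedMean μ (fun p ↦ gaussianPDF 0 v (-p.1 + p.2)) Prod.fst r
      = r + v * (deriv (gaussianConvPDFReal μ v) r / gaussianConvPDFReal μ v r) := by
  have hpos := gaussianConvPDFReal_pos μ r hv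
  simp only [weightedMean, toReal_gaussianPDF, neg_add_eq_sub, smul_eq_mul]
  rw [integral_gaussianPDFReal_sub_mul_id μ r hv, ← gaussianConvPDFReal]
  field_simp

end GaussianConvPDF

/-- Tweedie's formula (scalar form, eq. (1)): for `R = X + Z` with
`Z ~ N(0, v)` independent of `X`, the marginal density
`q(r) = ∫ φ_v(r − x) d(law X)(x)` of `R` is strictly positive and
differentiable, it is a Lebesgue density of the law of `R`, and the posterior
mean satisfies `E[X | σ(R)] = R + v·q'(R)/q(R)` almost surely. -/
theorem tweedie_formula
    {Ω : Type*} [MeasureSpace Ω] [IsProbabilityMeasure (ℙ : Measure Ω)]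
    (v : ℝ) (hv : 0 < v)
    (X Z : Ω → ℝ) (hX : Measurable X) (hZ : Measurable Z)
    (hXint : Integrable X ℙ)
    (hZlaw : Measure.map Z ℙ = gaussianReal 0 ⟨v, hv.le⟩)
    (hindep : IndepFun X Z ℙ)
    (R : Ω → ℝ) (hR : R = fun ω => X ω + Z ω)
    (q : ℝ → ℝ)
    (hq : q = fun r => ∫ x, gaussianPDFReal 0 ⟨v, hv.le⟩ (r - x) ∂(Measure.map X ℙ)) :
    (∀ r, 0 < q r) ∧ Differentiable ℝ q ∧
    Measure.map R ℙ = volume.withDensity (fun r => ENNReal.ofReal (q r)) ∧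
    ℙ[X | MeasurableSpace.comap R Real.measurableSpace]
      =ᵐ[ℙ] fun ω => R ω + v * (deriv q (R ω) / q (R ω)) := by
  lift v to ℝ≥0 using hv.le
  have hv0 : v ≠ 0 := (NNReal.coe_pos.1 hv).ne'
  obtain rfl : q = gaussianConvPDFReal (Measure.map X ℙ) v := hq
  have : IsProbabilityMeasure (Measure.map X ℙ) := Measure.isProbabilityMeasure_map hX.aemeasurable
  have hRm : Measurable R := hR ▸ hX.add hZ
  have hd : Measurable fun p : ℝ × ℝ ↦ gaussianPDF 0 v (-p.1 + p.2) := by fun_prop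
  have hlaw : Measure.map (fun ω ↦ (X ω, R ω)) ℙ = ((Measure.map X ℙ).prod volume).withDensity
      fun p ↦ gaussianPDF 0 v (-p.1 + p.2) :=
    hR ▸ map_prodMk_add_eq_withDensity_of_indepFun hX.aemeasurable hZ.aemeasurable hindep
      (measurable_gaussianPDF 0 v) (hZlaw.trans (gaussianReal_of_var_ne_zero 0 hv0))
  have hfst : Integrable Prod.fst (Measure.map (fun ω ↦ (X ω, R ω)) ℙ) :=
    (integrable_map_measure (by fun_prop) (by fun_prop)).2 hXint
  refine ⟨fun r ↦ gaussianConvPDFReal_pos _ r hv0,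
    fun r ↦ (hasDerivAt_gaussianConvPDFReal _ r).differentiableAt, ?_, ?_⟩
  · simpa only [ofReal_gaussianConvPDFReal, neg_add_eq_sub] using
      map_snd_eq_withDensity_of_map_prodMk hX.aemeasurable hRm.aemeasurable hd hlaw
  · exact (condExp_comap_ae_eq_weightedMean hX.aemeasurable hRm hd hlaw (hlaw ▸ hfst)).trans
      (.of_forall fun ω ↦ weightedMean_gaussianPDF_fst _ (R ω) hv0)
end
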